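/- arXiv:2006.06307 — 6 statements merged into one kernel-verified Lean document; each statement's English description precedes it below -/
import Mathlib

section
/- Let N ≥ 3 and let σ be an abelian N-free morphism, i.e. a morphism such that σ(u) is abelian N-free whenever u is abelian N-free. If w is a nonempty word that avoids abelian N-powers cyclically, then σ(w) avoids abelian N-powers cyclically. -/
/-- `u` is an abelian `N`-power of period `m`: a concatenation of `N` nonempty
pairwise abelian-equivalent words of common length `m`. -/
def IsAbelianPower {α : Type*} (N m : ℕ) (u : List α) : Prop :=
  0 < m ∧ ∃ f : Fin N → List α,
    u = (List.ofFn f).flatten ∧ (∀ i, (f i).length = m) ∧ ∀ i j, List.Perm (f i) (f j)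

/-- `u` occurs in the infinite word `w^ω`, i.e. `u` is a factor of `w^k` for some `k`. -/
def OccursCyc {α : Type*} (w u : List α) : Prop :=
  ∃ k : ℕ, u <:+: (List.replicate k w).flatten

/-- `w` avoids abelian `N`-powers cyclically: every abelian `N`-power of period `m`
occurring in `w^ω` satisfies `m ≥ |w|`. -/
def AvoidsAbelianCyc {α : Type*} (N : ℕ) (w : List α) : Prop :=
  ∀ m u, IsAbelianPower N m u → OccursCyc w u → w.length ≤ m

/-- Application of a morphism given by its images on letters. -/
def applyMorphism {α β : Type*} (σ : α → List β) (w : List α) : List β :=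
  (w.map σ).flatten

/-- A word is abelian N-free if it contains no abelian N-power as a factor. -/
def AbelianNFree {α : Type*} (N : ℕ) (u : List α) : Prop :=
  ¬ ∃ (m : ℕ) (v : List α), IsAbelianPower N m v ∧ v <:+: u

/-- The factor of the infinite word `g` of length `l` starting at position `c`. -/
def fac {β : Type*} (g : ℕ → β) (c l : ℕ) : List β := (List.range' c l).map g

theorem fac_add {β : Type*} (g : ℕ → β) (c a b : ℕ) :
    fac g c (a + b) = fac g c a ++ fac g (c + a) b := by
  unfold fac
  rw [← List.map_append]
  congr 1
  simp

theorem fac_length {β : Type*} (g : ℕ → β) (c l : ℕ) : (fac g c l).length = l := by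
  simp [fac]

theorem fac_shift {β : Type*} (g : ℕ → β) (L : ℕ) (hg : ∀ i, g (i + L) = g i) (c l k : ℕ) :
    fac g (c + k * L) l = fac g c l := by
  have hk : ∀ k i, g (i + k * L) = g i := by
    intro k
    induction k with
    | zero => simp
    | succ k ih => intro i; rw [Nat.succ_mul, ← Nat.add_assoc, hg, ih]
  apply List.ext_getElem
  · simp [fac]
  · intro i h1 h2
    simp only [fac, List.getElem_map, List.getElem_range']
    rw [← hk k (c + 1 * i)]
    congr 1
    omega

theorem fac_pow {β : Type*} (g : ℕ → β) (L : ℕ) (hg : ∀ i, g (i + L) = g i) (k : ℕ) :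
    fac g 0 (k * L) = (List.replicate k (fac g 0 L)).flatten := by
  induction k with
  | zero => simp [fac]
  | succ k ih =>
    rw [Nat.succ_mul, fac_add, ih, fac_shift g L hg 0 L k, List.replicate_succ',
      List.flatten_append]
    simp

/-- All rotations of the period have the same letters. -/
theorem fac_rot {β : Type*} (g : ℕ → β) (L : ℕ) (hg : ∀ i, g (i + L) = g i) (c : ℕ) :
    (fac g c L : Multiset β) = fac g 0 L := by
  have h1 := fac_add g 0 c L
  have h2 := fac_add g 0 L c
  rw [Nat.add_comm L c, h1] at h2
  have h3 := fac_shift g L hg 0 c 1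
  rw [Nat.one_mul] at h3
  rw [h3, Nat.zero_add] at h2
  have h4 := congrArg (fun l : List β => (l : Multiset β)) h2
  simp only [← Multiset.coe_add] at h4
  rw [add_comm] at h4
  exact add_right_cancel h4

/-- An abelian `N`-power of period `m` at position `x` in `g`. -/
def APat {β : Type*} (g : ℕ → β) (N x m : ℕ) : Prop :=
  0 < m ∧ ∃ D : Multiset β, ∀ i < N, (fac g (x + i * m) m : Multiset β) = D

theorem APat_shift {β : Type*} (g : ℕ → β) (L : ℕ) (hg : ∀ i, g (i + L) = g i) (N x m k : ℕ) :
    APat g N (x + k * L) m ↔ APat g N x m := by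
  have h : ∀ i, fac g (x + k * L + i * m) m = fac g (x + i * m) m := by
    intro i
    rw [Nat.add_right_comm]
    exact fac_shift g L hg _ _ _
  simp only [APat, h]

theorem APat_compl {β : Type*} (g : ℕ → β) (L : ℕ) (hg : ∀ i, g (i + L) = g i) (N x m : ℕ)
    (hm : m < L) (h : APat g N x m) : APat g N (x + N * m) (L - m) := by
  classical
  obtain ⟨h0, D, hD⟩ := h
  refine ⟨by omega, (fac g 0 L : Multiset β) - D, ?_⟩
  intro i hi
  obtain ⟨j, rfl⟩ : ∃ j, N = i + j + 1 := ⟨N - i - 1, by omega⟩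
  obtain ⟨d, rfl⟩ : ∃ d, L = m + d := ⟨L - m, by omega⟩
  have e : x + (i + j + 1) * m + i * (m + d - m) = x + j * m + m + i * (m + d) := by
    rw [Nat.add_sub_cancel_left]; ring
  have hj := hD j (by omega)
  rw [e, fac_shift g _ hg, ← fac_rot g _ hg (x + j * m), fac_add, ← Multiset.coe_add, hj,
    Nat.add_sub_cancel_left, add_tsub_cancel_left]

theorem APat_flatten {β : Type*} (g : ℕ → β) (N x m : ℕ) :
    fac g x (N * m) = (List.ofFn (fun i : Fin N => fac g (x + i * m) m)).flatten := by
  induction N with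
  | zero => simp [fac]
  | succ N ih =>
    rw [Nat.succ_mul, fac_add, ih, List.ofFn_succ_last]
    simp

theorem APat_occurs {β : Type*} (g : ℕ → β) (N x m k : ℕ)
    (h : APat g N x m) (hk : x + N * m ≤ k) : ¬ AbelianNFree N (fac g 0 k) := by
  obtain ⟨h0, D, hD⟩ := h
  intro hf
  apply hf
  refine ⟨m, fac g x (N * m), ⟨h0, _, APat_flatten g N x m, fun i => fac_length _ _ _, ?_⟩, ?_⟩
  · intro i j
    rw [← Multiset.coe_eq_coe, hD i i.2, hD j j.2]
  · obtain ⟨r, rfl⟩ := Nat.exists_eq_add_of_le hk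
    rw [fac_add, fac_add]
    refine ⟨fac g 0 x, fac g (0 + (x + N * m)) r, ?_⟩
    simp

theorem fac_flatten_inj {β : Type*} (g : ℕ → β) (m : ℕ) : ∀ (N x : ℕ) (f : Fin N → List β),
    (∀ i, (f i).length = m) → fac g x (N * m) = (List.ofFn f).flatten →
    ∀ i : Fin N, f i = fac g (x + i * m) m := by
  intro N
  induction N with
  | zero => intro x f _ _ i; exact i.elim0
  | succ N ih =>
    intro x f hf h i
    rw [Nat.succ_mul, Nat.add_comm, fac_add, List.ofFn_succ, List.flatten_cons] at h
    obtain ⟨h1, h2⟩ := List.append_inj h (by rw [fac_length, hf])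
    refine Fin.cases ?_ ?_ i
    · simpa using h1.symm
    · intro j
      rw [ih (x + m) (fun i => f i.succ) (fun i => hf _) h2 j]
      congr 1
      simp only [Fin.val_succ]
      ring

theorem APat_of_occurs {β : Type*} (g : ℕ → β) (N m k : ℕ) (hN : 0 < N) (u : List β)
    (hu : IsAbelianPower N m u) (h : u <:+: fac g 0 k) : ∃ x, APat g N x m := by
  obtain ⟨p, s, h⟩ := h
  obtain ⟨h0, f, rfl, hl, hp⟩ := hu
  have hlen : (List.ofFn f).flatten.length = N * m := by
    simp [List.length_flatten, List.map_ofFn, Function.comp_def, hl]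
  have hk : k = p.length + (N * m + s.length) := by
    have := congrArg List.length h
    rw [fac_length] at this
    simp only [List.length_append, hlen] at this
    omega
  rw [hk, fac_add, fac_add, List.append_assoc] at h
  obtain ⟨_, h2⟩ := List.append_inj h (by rw [fac_length])
  obtain ⟨h3, _⟩ := List.append_inj h2 (by rw [fac_length, hlen])
  have := fac_flatten_inj g m N _ f hl h3.symm
  refine ⟨0 + p.length, h0, (f ⟨0, hN⟩ : Multiset β), ?_⟩
  intro i hi
  rw [← this ⟨i, hi⟩, Multiset.coe_eq_coe]
  exact hp _ _

theorem applyMorphism_pow {α β : Type*} (σ : α → List β) (w : List α) (k : ℕ) :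
    applyMorphism σ (List.replicate k w).flatten
      = (List.replicate k (applyMorphism σ w)).flatten := by
  induction k with
  | zero => simp [applyMorphism]
  | succ k ih =>
    simp only [List.replicate_succ, List.flatten_cons, ← ih]
    simp [applyMorphism]

theorem pow_free {α : Type*} (N : ℕ) (w : List α) (hw : w ≠ []) (havoid : AvoidsAbelianCyc N w)
    (k : ℕ) (hk : k < N) : AbelianNFree N (List.replicate k w).flatten := by
  rintro ⟨m, v, hv, hvk⟩
  have h1 := havoid m v hv ⟨k, hvk⟩
  have h2 := hvk.length_le
  obtain ⟨h0, f, rfl, hl, hp⟩ := hv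
  have hlen : (List.ofFn f).flatten.length = N * m := by
    simp [List.length_flatten, List.map_ofFn, Function.comp_def, hl]
  have hlen2 : (List.replicate k w).flatten.length = k * w.length := by
    simp [List.length_flatten]
  rw [hlen, hlen2] at h2
  have hpos : 0 < w.length := List.length_pos_iff.2 hw
  nlinarith

theorem abelian_free_morphism_preserves_cyclic_avoidance
    {α β : Type*} (N : ℕ) (hN : 3 ≤ N) (σ : α → List β)
    (hσ : ∀ u : List α, AbelianNFree N u → AbelianNFree N (applyMorphism σ u))
    (w : List α) (hw : w ≠ []) (havoid : AvoidsAbelianCyc N w) :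
    AvoidsAbelianCyc N (applyMorphism σ w) := by
  intro m u hu ⟨k, hk⟩
  have hfree : ∀ k < N, AbelianNFree N (List.replicate k (applyMorphism σ w)).flatten := by
    intro k hk
    rw [← applyMorphism_pow]
    exact hσ _ (pow_free N w hw havoid k hk)
  generalize applyMorphism σ w = W at *
  by_contra hm
  have hm : m < W.length := by omega
  have hL : 0 < W.length := by omega
  obtain ⟨g, hg, hW⟩ : ∃ g : ℕ → β, (∀ i, g (i + W.length) = g i) ∧ fac g 0 W.length = W := by
    refine ⟨fun i => W[i % W.length]'(Nat.mod_lt _ hL), ?_, ?_⟩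
    · intro i; simp
    · apply List.ext_getElem
      · simp [fac]
      · intro i h1 h2
        simp [fac, Nat.mod_eq_of_lt h2]
  have hpow : ∀ k, fac g 0 (k * W.length) = (List.replicate k W).flatten := by
    intro k
    rw [fac_pow g _ hg, hW]
  generalize W.length = L at *
  rw [← hpow] at hk
  obtain ⟨y, hy⟩ := APat_of_occurs g N m _ (by omega) u hu hk
  obtain ⟨x, hx, hxL⟩ : ∃ x, APat g N x m ∧ x < L := by
    refine ⟨y % L, ?_, Nat.mod_lt _ hL⟩
    rw [← APat_shift g L hg N _ m (y / L), Nat.mod_add_div']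
    exact hy
  obtain ⟨K, rfl⟩ : ∃ K, N = K + 1 := ⟨N - 1, by omega⟩
  by_cases hc : x + (K + 1) * m ≤ K * L
  · exact APat_occurs g _ x m _ hx hc (by rw [hpow]; exact hfree K (by omega))
  · have h2 := APat_compl g L hg _ x m hm hx
    obtain ⟨z, hz⟩ : ∃ z, x + (K + 1) * m = z + K * L := ⟨x + (K + 1) * m - K * L, by omega⟩
    rw [hz, APat_shift g L hg] at h2
    refine APat_occurs g _ z (L - m) (2 * L) h2 ?_ (by rw [hpow]; exact hfree 2 (by omega))
    obtain ⟨d, rfl⟩ : ∃ d, L = m + d := ⟨L - m, by omega⟩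
    rw [Nat.add_sub_cancel_left]
    nlinarith
end

section
/- Let σ be an abelian 2-free morphism, i.e. a morphism such that σ(u) is abelian 2-free whenever u is abelian 2-free. If w is a word with |w| ≥ 2 that avoids abelian 2-powers cyclically, then σ(w) avoids abelian 2-powers cyclically. -/
theorem isAbelianPower_two_iff {α : Type*} (m : ℕ) (u : List α) :
    IsAbelianPower 2 m u ↔
      0 < m ∧ ∃ x y : List α, u = x ++ y ∧ x.length = m ∧ List.Perm x y := by
  constructor
  · rintro ⟨h, f, hu, hl, hp⟩
    exact ⟨h, f 0, f 1, by simpa [List.ofFn_succ] using hu, hl 0, hp 0 1⟩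
  · rintro ⟨h, x, y, hu, hl, hp⟩
    refine ⟨h, ![x, y], by simpa [List.ofFn_succ] using hu, ?_, ?_⟩
    · intro i
      fin_cases i
      · simpa using hl
      · simpa [hp.length_eq] using hl
    · intro i j
      fin_cases i <;> fin_cases j <;> simp [hp, hp.symm]

/-- A factor of `z^k` of length at most `2|z|` is a prefix of the square of a conjugate of `z`. -/
theorem infix_pow_conj {β : Type*} (z : List β) (hz : z ≠ []) (x : List β)
    (hx : x.length ≤ 2 * z.length) (k : ℕ)
    (h : x <:+: (List.replicate k z).flatten) :
    ∃ s r : List β, z = s ++ r ∧ r ≠ [] ∧ x <+: (r ++ s) ++ (r ++ s) := by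
  induction k with
  | zero =>
    have : x = [] := by simpa using h
    exact ⟨[], z, by simp, hz, by simp [this]⟩
  | succ k ih =>
    obtain ⟨s, t, hst⟩ := h
    rw [List.replicate_succ, List.flatten_cons, List.append_assoc] at hst
    by_cases hs : z.length ≤ s.length
    · apply ih
      obtain ⟨s', rfl⟩ : z <+: s :=
        List.prefix_of_prefix_length_le (l₃ := s ++ (x ++ t)) (by rw [hst]; simp) (by simp) hs
      refine ⟨s', t, ?_⟩
      simpa using hst
    · obtain ⟨r, rfl⟩ : s <+: z :=
        List.prefix_of_prefix_length_le (l₃ := s ++ (x ++ t)) (by simp) (by rw [hst]; simp) (by omega)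
      refine ⟨s, r, rfl, ?_, ?_⟩
      · rintro rfl
        simp at hs
      · have h1 : x ++ t = r ++ (List.replicate k (s ++ r)).flatten := by
          simpa using hst
        set P := (List.replicate k (s ++ r)).flatten with hP
        have h2 : P ++ ((s ++ r) ++ (s ++ r)) = (s ++ r) ++ (s ++ r) ++ P := by
          have e1 : (List.replicate (k + 2) (s ++ r)).flatten = P ++ ((s ++ r) ++ (s ++ r)) := by
            rw [List.replicate_add, List.flatten_append]; simp [List.replicate_succ, hP]
          have e2 : (List.replicate (2 + k) (s ++ r)).flatten = (s ++ r) ++ (s ++ r) ++ P := by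
            rw [List.replicate_add, List.flatten_append]; simp [List.replicate_succ, hP]
          rw [← e1, ← e2, Nat.add_comm]
        apply List.prefix_of_prefix_length_le (l₃ := r ++ (P ++ ((s ++ r) ++ (s ++ r))))
        · rw [← List.append_assoc, ← h1]; simp
        · rw [h2]; exact ⟨r ++ P, by simp⟩
        · simp at hx ⊢; omega

/-- A cut of the image of a word falls inside the image of some letter. -/
theorem applyMorphism_split {α β : Type*} (σ : α → List β) (w : List α) (s r : List β)
    (h : applyMorphism σ w = s ++ r) (hr : r ≠ []) :
    ∃ a c b C D, w = a ++ c :: b ∧ σ c = C ++ D ∧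
      s = applyMorphism σ a ++ C ∧ r = D ++ applyMorphism σ b := by
  induction w generalizing s with
  | nil => simp [applyMorphism] at h; exact absurd h.2 hr
  | cons c w ih =>
    have h' : σ c ++ applyMorphism σ w = s ++ r := by simpa [applyMorphism] using h
    rcases List.append_eq_append_iff.1 h' with ⟨e, h1, h2⟩ | ⟨e, h1, h2⟩
    · obtain ⟨a, c', b, C, D, rfl, h4, rfl, h6⟩ := ih e h2
      exact ⟨c :: a, c', b, C, D, by simp, h4, by simp [h1, applyMorphism], h6⟩
    · exact ⟨[], c, w, s, e, by simp, h1, by simp [applyMorphism], h2⟩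

/-- An abelian square of period `m < |z|` in `z z` yields an abelian square in `z`. -/
theorem square_in_conj {β : Type*} (z x y : List β) (hx : 0 < x.length)
    (hlt : x.length < z.length) (hp : List.Perm x y) (h : x ++ y <+: z ++ z) :
    ∃ m v, IsAbelianPower 2 m v ∧ v <:+: z := by
  by_cases hl : 2 * x.length ≤ z.length
  · refine ⟨x.length, x ++ y, (isAbelianPower_two_iff _ _).2 ⟨hx, x, y, rfl, rfl, hp⟩, ?_⟩
    have := List.prefix_of_prefix_length_le h (List.prefix_append z z)
      (by simp [← hp.length_eq]; omega)
    exact this.isInfix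
  · obtain ⟨t, rfl⟩ : x <+: z :=
      List.prefix_of_prefix_length_le ((List.prefix_append x y).trans h)
        (List.prefix_append z z) hlt.le
    have h1 : y <+: t ++ (x ++ t) := by
      rw [List.append_assoc] at h
      exact (List.prefix_append_right_inj x).1 h
    have hyl := hp.length_eq
    simp at hl hlt
    obtain ⟨q, rfl⟩ : t <+: y :=
      List.prefix_of_prefix_length_le (List.prefix_append _ _) h1 (by omega)
    have h2 : q <+: x ++ t := (List.prefix_append_right_inj t).1 h1
    simp at hyl
    obtain ⟨r, rfl⟩ : q <+: x :=
      List.prefix_of_prefix_length_le h2 (List.prefix_append _ _) (by omega)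
    have h3 : List.Perm r t :=
      (List.perm_append_left_iff q).1 (hp.trans List.perm_append_comm)
    refine ⟨r.length, r ++ t, (isAbelianPower_two_iff _ _).2 ⟨?_, r, t, rfl, rfl, h3⟩, ?_⟩
    · rw [h3.length_eq]; exact hlt
    · exact ⟨q, [], by simp⟩

theorem abelian_square_free_morphism_preserves_cyclic_avoidance
    {α β : Type*} (σ : α → List β)
    (hσ : ∀ u : List α, AbelianNFree 2 u → AbelianNFree 2 (applyMorphism σ u))
    (w : List α) (hw : 2 ≤ w.length) (havoid : AvoidsAbelianCyc 2 w) :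
    AvoidsAbelianCyc 2 (applyMorphism σ w) := by
  rintro m u hu ⟨k, hk⟩
  by_contra hlt
  push Not at hlt
  obtain ⟨hm, x, y, rfl, hxm, hp⟩ := (isAbelianPower_two_iff _ _).1 hu
  have hne : applyMorphism σ w ≠ [] := List.length_pos_iff.1 (by omega)
  obtain ⟨s, r, hsr, hr, hpre⟩ := infix_pow_conj _ hne (x ++ y)
    (by simp [← hp.length_eq]; omega) k hk
  obtain ⟨m', v, hv, hvz⟩ := square_in_conj (r ++ s) x y (by omega)
    (by rw [hsr] at hlt; simp at hlt ⊢; omega) hp hpre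
  obtain ⟨a, c, b, C, D, rfl, hc, rfl, rfl⟩ := applyMorphism_split σ w s r hsr hr
  refine hσ (c :: b ++ a ++ [c]) ?_ ⟨m', v, hv, hvz.trans ⟨C, D, ?_⟩⟩
  · rintro ⟨p, v', hv', hin⟩
    have h1 := havoid p v' hv' ⟨2, hin.trans ⟨a, b, by simp [List.replicate_succ]⟩⟩
    obtain ⟨-, x', y', rfl, hx', hp'⟩ := (isAbelianPower_two_iff _ _).1 hv'
    have h2 := hin.length_le
    have h3 := hp'.length_eq
    simp at h1 h2 hw
    omega
  · simp [applyMorphism, hc]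
end

section
/- Let N ≥ 2, let w be a word containing no abelian N-power as a factor, and let # be a letter that does not appear in w. Then the word w# avoids abelian N-powers cyclically. -/
/-- The window of length `n` starting at `s` of an infinite word `W`. -/
def winOf {α : Type*} (W : ℕ → α) (s n : ℕ) : List α := (List.range' s n).map W

theorem winOf_length {α : Type*} (W : ℕ → α) (s n : ℕ) : (winOf W s n).length = n := by
  simp [winOf]

theorem winOf_append {α : Type*} (W : ℕ → α) (s m n : ℕ) :
    winOf W s m ++ winOf W (s + m) n = winOf W s (m + n) := by
  simp [winOf, ← List.map_append, List.range'_append_1]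

theorem winOf_shift {α : Type*} (W : ℕ → α) (L : ℕ) (hW : ∀ n, W (n + L) = W n) (s n q : ℕ) :
    winOf W (s + q * L) n = winOf W s n := by
  have hq : ∀ q n, W (n + q * L) = W n := by
    intro q
    induction q with
    | zero => simp
    | succ q ih => intro n; rw [Nat.succ_mul, ← add_assoc, hW, ih]
  apply List.ext_getElem
  · simp [winOf]
  · intro i h1 h2
    simp only [winOf, List.getElem_map, List.getElem_range', one_mul]
    rw [← hq q (s + i)]
    congr 1
    omega

theorem winOf_perm_zero {α : Type*} (W : ℕ → α) (L : ℕ) (hW : ∀ n, W (n + L) = W n) (s : ℕ) :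
    List.Perm (winOf W s L) (winOf W 0 L) := by
  induction s with
  | zero => exact List.Perm.refl _
  | succ s ih =>
    refine List.Perm.trans ?_ ih
    have e1 := winOf_append W s 1 L
    have e2 := winOf_append W s L 1
    rw [add_comm 1 L, ← e2] at e1
    have a1 : winOf W s 1 = [W s] := by simp [winOf]
    have a2 : winOf W (s + L) 1 = [W s] := by simp [winOf, hW]
    rw [a1, a2] at e1
    have p : List.Perm ([W s] ++ winOf W (s + 1) L) ([W s] ++ winOf W s L) := by
      rw [e1]; exact List.perm_append_comm
    exact (List.perm_append_left_iff _).1 p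

theorem flatten_winOf {α : Type*} (W : ℕ → α) (d N : ℕ) : ∀ s,
    (List.ofFn (fun i : Fin N => winOf W (s + i * d) d)).flatten = winOf W s (N * d) := by
  induction N with
  | zero => intro s; simp [winOf]
  | succ N ih =>
    intro s
    rw [List.ofFn_succ, List.flatten_cons, Nat.succ_mul, add_comm (N * d) d, ← winOf_append,
      ← ih (s + d)]
    simp only [Fin.val_zero, zero_mul, add_zero, Fin.val_succ]
    congr 4
    funext i
    congr 1
    ring

theorem blocks_winOf {α : Type*} (W : ℕ → α) (m N : ℕ) : ∀ (s : ℕ) (f : Fin N → List α),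
    (∀ i, (f i).length = m) → (List.ofFn f).flatten = winOf W s (N * m) →
    ∀ i, f i = winOf W (s + i * m) m := by
  induction N with
  | zero => intro s f _ _ i; exact i.elim0
  | succ N ih =>
    intro s f hf he
    rw [List.ofFn_succ, List.flatten_cons, Nat.succ_mul, add_comm (N * m) m, ← winOf_append] at he
    obtain ⟨h1, h2⟩ := List.append_inj he (by rw [hf, winOf_length])
    intro i
    refine Fin.cases ?_ (fun j => ?_) i
    · simpa using h1
    · rw [ih (s + m) (fun i => f i.succ) (fun i => hf _) h2 j]
      congr 1
      simp only [Fin.val_succ]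
      ring

theorem infix_winOf {α : Type*} (W : ℕ → α) (n : ℕ) (u : List α) (hu : u <:+: winOf W 0 n) :
    ∃ s, u = winOf W s u.length := by
  obtain ⟨a, b, e⟩ := hu
  refine ⟨a.length, ?_⟩
  have hl : a.length + u.length + b.length = n := by
    have := congrArg List.length e
    simpa [winOf_length, add_assoc] using this
  rw [← hl, ← winOf_append, ← winOf_append, zero_add] at e
  have h1 := (List.append_inj e (by simp [winOf_length])).1
  exact (List.append_inj h1 (by simp [winOf_length])).2

theorem replicate_winOf {α : Type*} (W : ℕ → α) (v : List α) (hW : ∀ n, W (n + v.length) = W n)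
    (hv : winOf W 0 v.length = v) (k : ℕ) :
    (List.replicate k v).flatten = winOf W 0 (k * v.length) := by
  induction k with
  | zero => simp [winOf]
  | succ k ih =>
    rw [List.replicate_succ, List.flatten_cons, ih, Nat.succ_mul, add_comm (k * v.length),
      ← winOf_append, hv]
    have := winOf_shift W v.length hW 0 (k * v.length) 1
    rw [one_mul] at this
    rw [this]

theorem winOf_infix {α : Type*} (W : ℕ → α) (w : List α) (h : α)
    (hW : ∀ n, W (n + (w.length + 1)) = W n)
    (hv : winOf W 0 (w.length + 1) = w ++ [h]) (s n : ℕ) (hn : h ∉ winOf W s n) :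
    winOf W s n <:+: w := by
  have hs : s = s % (w.length + 1) + (s / (w.length + 1)) * (w.length + 1) := by
    rw [mul_comm]; exact (Nat.mod_add_div _ _).symm
  have hr : s % (w.length + 1) < w.length + 1 := Nat.mod_lt _ (by omega)
  rw [hs, winOf_shift W _ hW] at hn ⊢
  generalize s % (w.length + 1) = r at *
  rw [← winOf_append, zero_add] at hv
  obtain ⟨h1, h2⟩ := List.append_inj hv (by simp [winOf_length])
  have h3 : W w.length = h := by simpa [winOf] using h2
  have hle : r + n ≤ w.length := by
    by_contra hc
    apply hn
    rw [← h3, winOf]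
    apply List.mem_map_of_mem
    rw [List.mem_range'_1]
    omega
  obtain ⟨c, hc⟩ := Nat.exists_eq_add_of_le hle
  refine ⟨winOf W 0 r, winOf W (r + n) c, ?_⟩
  conv_rhs => rw [← h1, hc]
  rw [← winOf_append, ← winOf_append]
  simp

theorem add_letter_avoids_cyclically {α : Type*} (N : ℕ) (hN : 2 ≤ N)
    (w : List α)
    (hfree : ¬ ∃ (m : ℕ) (v : List α), IsAbelianPower N m v ∧ v <:+: w)
    (h : α) (hh : h ∉ w) :
    AvoidsAbelianCyc N (w ++ [h]) := by
  classical
  rintro m u ⟨hm, f, rfl, hlen, hperm⟩ ⟨k, hk⟩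
  by_contra hlt
  have hvl : (w ++ [h]).length = w.length + 1 := by simp
  rw [hvl] at hlt
  obtain ⟨W, hW, hv⟩ : ∃ W : ℕ → α, (∀ n, W (n + (w.length + 1)) = W n) ∧
      winOf W 0 (w.length + 1) = w ++ [h] := by
    refine ⟨fun n => (w ++ [h])[n % (w.length + 1)]'(by
      rw [hvl]; exact Nat.mod_lt _ (by omega)), ?_, ?_⟩
    · intro n; simp
    · apply List.ext_getElem
      · simp [winOf]
      · intro i h1 h2
        have : i % (w.length + 1) = i := Nat.mod_eq_of_lt (by simpa using h2)
        simp only [winOf, List.getElem_map, List.getElem_range', one_mul, zero_add, this]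
  rw [replicate_winOf W _ (by rw [hvl]; exact hW) (by rw [hvl]; exact hv)] at hk
  obtain ⟨s, hs⟩ := infix_winOf W _ _ hk
  have hul : (List.ofFn f).flatten.length = N * m := by
    simp [List.length_flatten, List.map_ofFn, Function.comp_def, hlen, List.sum_ofFn]
  rw [hul] at hs
  have hb := blocks_winOf W m N s f hlen hs
  by_cases hmem : ∃ i, h ∈ f i
  · obtain ⟨i0, hi0⟩ := hmem
    have hall : ∀ i, h ∈ f i := fun i => (hperm i0 i).mem_iff.1 hi0
    obtain ⟨d, hd⟩ : ∃ d, w.length + 1 = m + d := Nat.exists_eq_add_of_le (by omega)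
    have key : ∀ j : Fin N, List.Perm (f j.rev ++ winOf W (s + N * m + j * d) d) (w ++ [h]) := by
      intro j
      rw [hb, ← winOf_shift W _ hW _ _ j, ← hv]
      have e : s + N * m + j * d = s + (j.rev : ℕ) * m + j * (w.length + 1) + m := by
        obtain ⟨c, hc⟩ := Nat.exists_eq_add_of_lt j.2
        have : (j.rev : ℕ) = c := by rw [Fin.val_rev]; omega
        rw [this, hd]
        have hc2 : N * m = (j + c + 1) * m := congrArg (· * m) hc
        rw [hc2]
        ring
      rw [e, winOf_append, ← hd]
      exact winOf_perm_zero W _ hW _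
    have hno : ∀ j : Fin N, h ∉ winOf W (s + N * m + j * d) d := by
      intro j hj
      have c := (key j).count_eq h
      rw [List.count_append, List.count_append, List.count_eq_zero_of_not_mem hh] at c
      have c1 := List.count_pos_iff.2 hj
      have c2 := List.count_pos_iff.2 (hall j.rev)
      simp at c
      omega
    refine hfree ⟨d, winOf W (s + N * m) (N * d), ⟨by omega, _, (flatten_winOf W d N _).symm,
      fun i => winOf_length _ _ _, ?_⟩, winOf_infix W w h hW hv _ _ ?_⟩
    · intro i j
      have p := (key i).trans (key j).symm
      have p2 := ((hperm j.rev i.rev).append_right (winOf W (s + N * m + i * d) d)).trans p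
      exact (List.perm_append_left_iff _).1 p2
    · rw [← flatten_winOf]
      intro hc
      rw [List.mem_flatten] at hc
      obtain ⟨l, hl, hl2⟩ := hc
      rw [List.mem_ofFn] at hl
      obtain ⟨j, rfl⟩ := hl
      exact hno j hl2
  · refine hfree ⟨m, (List.ofFn f).flatten, ⟨hm, f, rfl, hlen, hperm⟩, ?_⟩
    rw [hs]
    apply winOf_infix W w h hW hv
    rw [← hs]
    intro hc
    rw [List.mem_flatten] at hc
    obtain ⟨l, hl, hl2⟩ := hc
    rw [List.mem_ofFn] at hl
    obtain ⟨j, rfl⟩ := hl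
    exact hmem ⟨j, hl2⟩
end

section
/- Let x be a nonempty word and N ≥ 2. If the infinite word x^ω contains an (ordinary) N-power of period m with |x|/2 ≤ m < |x|, then x^ω contains an N-power of period |x| − m. -/
/-- `u` is an (ordinary) `N`-power of period `m`. -/
def IsPower {α : Type*} (N m : ℕ) (u : List α) : Prop :=
  0 < m ∧ ∃ v : List α, v.length = m ∧ u = (List.replicate N v).flatten

theorem aux_getElem_rep {α : Type*} (w : List α) (k i : ℕ) (h : i < k * w.length) :
    ((List.replicate k w).flatten)[i]? = w[i % w.length]? := by
  induction k generalizing i with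
  | zero => simp at h
  | succ k ih =>
    rw [List.replicate_succ, List.flatten_cons]
    by_cases hi : i < w.length
    · rw [List.getElem?_append_left hi, Nat.mod_eq_of_lt hi]
    · push Not at hi
      rw [List.getElem?_append_right hi, ih, Nat.mod_eq_sub_mod hi]
      rw [Nat.succ_mul] at h
      omega

theorem aux_len_rep {α : Type*} (w : List α) (k : ℕ) :
    ((List.replicate k w).flatten).length = k * w.length := by
  simp

theorem aux_period {β : Type*} (f : ℕ → β) (q d L : ℕ) (hd : 0 < d)
    (h : ∀ i, i + d < L → f (q + i) = f (q + i + d)) (i : ℕ) (hi : i < L) :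
    f (q + i) = f (q + i % d) := by
  induction i using Nat.strong_induction_on with
  | _ i ih =>
    by_cases hid : i < d
    · rw [Nat.mod_eq_of_lt hid]
    · push Not at hid
      have h1 := h (i - d) (by omega)
      have h2 := ih (i - d) (by omega) (by omega)
      rw [show q + (i - d) + d = q + i by omega] at h1
      rw [← h1, h2, ← Nat.mod_eq_sub_mod hid]

theorem ordinary_reduction_short {α : Type*} (x : List α) (hx : x ≠ [])
    (N : ℕ) (hN : 2 ≤ N) (m : ℕ)
    (hm₁ : x.length ≤ 2 * m) (hm₂ : m < x.length)
    (h : ∃ u : List α, IsPower N m u ∧ OccursCyc x u) :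
    ∃ v : List α, IsPower N (x.length - m) v ∧ OccursCyc x v := by
  obtain ⟨u, ⟨hm, w, hw, hu⟩, k, s, t, hst⟩ := h
  have hn : 0 < x.length := by omega
  obtain ⟨d, hd⟩ : ∃ d, x.length - m = d := ⟨_, rfl⟩
  rw [hd]
  have hd0 : 0 < d := by omega
  have hul : u.length = N * m := by rw [hu, aux_len_rep, hw]
  have hlen : s.length + N * m + t.length = k * x.length := by
    rw [← aux_len_rep, ← hst, ← hul]; simp [Nat.add_assoc]
  -- the letters of `u`
  have hX : ∀ i, i < N * m → x[(s.length + i) % x.length]? = w[i % m]? := by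
    intro i hi
    rw [← aux_getElem_rep x k _ (by omega), ← hst, List.append_assoc,
      List.getElem?_append_right (by omega), List.getElem?_append_left (by omega), hu,
      Nat.add_sub_cancel_left, aux_getElem_rep w N i (by rw [hw]; exact hi), hw]
  have hNd : (N - 1) * d ≤ (N - 1) * m := Nat.mul_le_mul_left _ (by omega)
  have hN1 : N * d = (N - 1) * d + d := by
    obtain ⟨M, rfl⟩ : ∃ M, N = M + 1 := ⟨N - 1, by omega⟩
    simp [Nat.succ_mul]
  have hN2 : N * m = (N - 1) * m + m := by
    obtain ⟨M, rfl⟩ : ∃ M, N = M + 1 := ⟨N - 1, by omega⟩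
    simp [Nat.succ_mul]
  obtain ⟨q, hq⟩ : ∃ q, q = s.length + m := ⟨_, rfl⟩
  have hper := aux_period (fun i => x[i % x.length]?) q d (N * d) hd0 (by
    intro i hi
    have h1 := hX i (by omega)
    have h2 := hX (m + i) (by omega)
    rw [Nat.add_mod_left, ← h1] at h2
    show x[(q + i) % x.length]? = x[(q + i + d) % x.length]?
    rw [show q + i + d = s.length + i + x.length by omega, Nat.add_mod_right, ← h2, hq,
      Nat.add_assoc])
  have hvl : (List.ofFn (fun i : Fin d =>
      x[(q + i) % x.length]'(Nat.mod_lt _ hn))).length = d := by simp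
  have hvg : ∀ i, i < d → (List.ofFn (fun i : Fin d =>
      x[(q + i) % x.length]'(Nat.mod_lt _ hn)))[i]? = x[(q + i) % x.length]? := by
    intro i hi
    rw [List.getElem?_eq_getElem (by simpa using hi),
      List.getElem?_eq_getElem (Nat.mod_lt _ hn)]
    simp
  generalize List.ofFn (fun i : Fin d => x[(q + i) % x.length]'(Nat.mod_lt _ hn)) = v at hvl hvg
  refine ⟨(List.replicate N v).flatten, ⟨hd0, v, hvl, rfl⟩, q + N * d, ?_⟩
  have hbig : q + N * d ≤ (q + N * d) * x.length := Nat.le_mul_of_pos_right _ hn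
  have key : (List.replicate N v).flatten =
      (((List.replicate (q + N * d) x).flatten).drop q).take (N * d) := by
    apply List.ext_getElem?
    intro i
    by_cases hi : i < N * d
    · rw [aux_getElem_rep v N i (by rw [hvl]; exact hi), hvl, hvg _ (Nat.mod_lt _ hd0),
        List.getElem?_take_of_lt hi, List.getElem?_drop, aux_getElem_rep x _ _ (by omega)]
      exact (hper i hi).symm
    · rw [List.getElem?_eq_none (by rw [aux_len_rep, hvl]; omega),
        List.getElem?_eq_none (by rw [List.length_take]; omega)]
  rw [key]
  exact (List.take_prefix _ _).isInfix.trans (List.drop_suffix _ _).isInfix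
end

section
/- If n is a positive integer with n ∉ {5, 7, 9, 10, 14, 17}, then there exists a word of length n over a 3-letter alphabet that avoids 2-powers cyclically. -/
/-- `w` avoids `N`-powers cyclically. -/
def AvoidsPowerCyc {α : Type*} (N : ℕ) (w : List α) : Prop :=
  ∀ m u, IsPower N m u → OccursCyc w u → w.length ≤ m

/-! Circular square-free ternary words.  Small lengths are explicit; longer ones come from a
substitution with blocks of every length from 22 to 33 for each letter, every block starting with
the marker 01021, which occurs in images only at block starts. -/

/-- `r` serves as a unary counter: the first `|r|` letters of the two words exist and agree. -/
noncomputable def mtM (r : List ℕ) : List ℕ → List ℕ → Bool :=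
  List.rec (motive := fun _ => List ℕ → List ℕ → Bool) (fun _ _ => true)
    (fun _ _ ih x y => List.rec (motive := fun _ => Bool) false
      (fun a x' _ => List.rec (motive := fun _ => Bool) false
        (fun b y' _ => Bool.rec false (ih x' y') (Nat.beq a b)) y) x) r

/-- no square at the front of `l`, with half-length from `|r|` on, `f` being fuel -/
noncomputable def frM : List ℕ → List ℕ → List ℕ → List ℕ → Bool
  | [], _, _, _ => true
  | _ :: _, _, _, [] => true
  | _ :: f, r, l, c :: t => !(mtM r l (c :: t)) && frM f (c :: r) l t

/-- no square of period at most `|f|` in the word -/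
noncomputable def noSqM (f : List ℕ) : List ℕ → Bool
  | [] => true
  | c :: t => frM f [c] (c :: t) t && noSqM f t

def markM : List ℕ := [0,1,0,2,1]

/-- no square starting in the given suffix `t` of a block and having its middle `|k|` letters
into the word `Q` that follows; `R` is `Q` without its first `|k|` letters -/
noncomputable def cenM (k Q R : List ℕ) : List ℕ → Bool
  | [] => true
  | c :: t => !(mtM ((c :: t) ++ k) ((c :: t) ++ Q) R) && cenM k Q R t

def tblM : List (ℕ × List ℕ) := [
  (0, [0,1,0,2,1,2,0,2,1,0,1,2,1,0,2,0,1,2,1,0,1,2]),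
  (0, [0,1,0,2,1,2,0,2,1,0,1,2,0,2,1,2,0,1,2,1,0,1,2]),
  (0, [0,1,0,2,1,2,0,2,1,0,1,2,1,0,2,0,1,2,0,2,1,0,1,2]),
  (0, [0,1,0,2,1,2,0,2,1,0,1,2,0,1,0,2,0,1,2,0,2,1,0,1,2]),
  (0, [0,1,0,2,1,0,1,2,0,1,0,2,0,1,2,0,2,1,2,0,1,2,1,0,1,2]),
  (0, [0,1,0,2,1,2,0,2,1,0,1,2,0,2,1,2,0,1,0,2,0,1,2,1,0,1,2]),
  (0, [0,1,0,2,1,2,0,2,1,0,1,2,1,0,2,1,2,0,1,0,2,0,1,2,1,0,1,2]),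
  (0, [0,1,0,2,1,2,0,2,1,0,1,2,1,0,2,0,1,2,0,2,1,2,0,1,2,1,0,1,2]),
  (0, [0,1,0,2,1,2,0,2,1,0,1,2,0,2,1,2,0,1,2,1,0,2,1,2,0,2,1,0,1,2]),
  (0, [0,1,0,2,1,0,1,2,0,1,0,2,0,1,2,1,0,2,1,2,0,1,0,2,0,1,2,1,0,1,2]),
  (0, [0,1,0,2,1,2,0,2,1,0,1,2,1,0,2,1,2,0,1,2,1,0,2,0,1,2,0,2,1,0,1,2]),
  (0, [0,1,0,2,1,0,1,2,0,1,0,2,0,1,2,1,0,1,2,0,2,1,0,2,0,1,2,0,2,1,0,1,2]),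
  (1, [0,1,0,2,1,0,1,2,0,2,1,2,0,1,0,2,0,1,2,1,0,2]),
  (1, [0,1,0,2,1,0,1,2,1,0,2,1,2,0,1,0,2,0,1,2,1,0,2]),
  (1, [0,1,0,2,1,0,1,2,0,2,1,2,0,1,0,2,0,1,2,0,2,1,0,2]),
  (1, [0,1,0,2,1,0,1,2,1,0,2,1,2,0,1,2,1,0,1,2,0,2,1,0,2]),
  (1, [0,1,0,2,1,0,1,2,0,2,1,2,0,1,2,1,0,2,0,1,2,0,2,1,0,2]),
  (1, [0,1,0,2,1,0,1,2,1,0,2,1,2,0,1,2,1,0,2,0,1,2,0,2,1,0,2]),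
  (1, [0,1,0,2,1,0,1,2,0,2,1,2,0,1,0,2,0,1,2,1,0,1,2,0,2,1,0,2]),
  (1, [0,1,0,2,1,0,1,2,1,0,2,1,2,0,2,1,0,1,2,0,1,0,2,0,1,2,1,0,2]),
  (1, [0,1,0,2,1,0,1,2,1,0,2,1,2,0,2,1,0,2,0,1,2,1,0,1,2,0,2,1,0,2]),
  (1, [0,1,0,2,1,0,1,2,0,2,1,0,2,0,1,2,1,0,2,1,2,0,1,0,2,0,1,2,1,0,2]),
  (1, [0,1,0,2,1,0,1,2,0,2,1,0,2,0,1,2,0,2,1,2,0,1,0,2,0,1,2,0,2,1,0,2]),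
  (1, [0,1,0,2,1,0,1,2,1,0,2,1,2,0,2,1,0,1,2,0,2,1,2,0,1,0,2,0,1,2,1,0,2]),
  (2, [0,1,0,2,1,2,0,1,2,1,0,1,2,0,2,1,0,1,2,1,0,2]),
  (2, [0,1,0,2,1,2,0,1,2,1,0,1,2,0,2,1,2,0,1,2,1,0,2]),
  (2, [0,1,0,2,1,2,0,2,1,0,2,0,1,2,0,2,1,2,0,1,2,1,0,2]),
  (2, [0,1,0,2,1,2,0,1,2,1,0,2,0,1,2,0,2,1,2,0,1,2,1,0,2]),
  (2, [0,1,0,2,1,2,0,1,2,1,0,2,1,2,0,2,1,0,2,0,1,2,0,2,1,2]),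
  (2, [0,1,0,2,1,2,0,2,1,0,2,0,1,2,1,0,1,2,0,2,1,0,1,2,1,0,2]),
  (2, [0,1,0,2,1,2,0,2,1,0,2,0,1,2,1,0,1,2,0,2,1,2,0,1,2,1,0,2]),
  (2, [0,1,0,2,1,2,0,2,1,0,2,0,1,2,1,0,1,2,0,1,0,2,0,1,2,0,2,1,2]),
  (2, [0,1,0,2,1,2,0,2,1,0,2,0,1,2,0,2,1,0,1,2,1,0,2,0,1,2,0,2,1,2]),
  (2, [0,1,0,2,1,2,0,1,2,1,0,2,1,2,0,1,0,2,0,1,2,1,0,2,1,2,0,2,1,0,2]),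
  (2, [0,1,0,2,1,2,0,2,1,0,2,0,1,2,1,0,2,1,2,0,1,2,1,0,2,0,1,2,0,2,1,2]),
  (2, [0,1,0,2,1,2,0,1,2,1,0,1,2,0,2,1,2,0,1,0,2,0,1,2,0,2,1,0,1,2,1,0,2])]

def baseM : List (List ℕ) := [
  [0],
  [0,1],
  [0,1,2],
  [0,1,0,2],
  [0,1,0,2,1,2],
  [0,1,0,2,1,0,1,2],
  [0,1,0,2,0,1,2,0,2,1,2],
  [0,1,0,2,0,1,2,1,0,2,1,2],
  [0,1,0,2,0,1,2,0,2,1,0,1,2],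
  [0,1,0,2,0,1,2,1,0,1,2,0,2,1,2],
  [0,1,0,2,0,1,2,1,0,2,0,1,0,2,1,2],
  [0,1,0,2,0,1,2,0,2,1,0,1,2,1,0,2,1,2],
  [0,1,0,2,0,1,2,0,2,1,0,2,0,1,2,1,0,1,2],
  [0,1,0,2,0,1,2,0,2,1,0,2,0,1,0,2,1,0,1,2],
  [0,1,0,2,1,0,1,2,0,2,1,0,2,0,1,2,1,0,2,1,2],
  [0,1,0,2,0,1,2,0,2,1,0,1,2,1,0,2,0,1,0,2,1,2],
  [0,1,0,2,0,1,2,0,2,1,0,1,2,1,0,2,0,1,2,0,2,1,2],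
  [0,1,0,2,0,1,2,0,2,1,0,1,2,1,0,2,0,1,0,2,1,0,1,2],
  [0,1,0,2,0,1,2,0,2,1,0,1,2,0,1,0,2,0,1,2,1,0,2,1,2],
  [0,1,0,2,0,1,2,0,2,1,0,1,2,0,1,0,2,1,0,1,2,1,0,2,1,2],
  [0,1,0,2,0,1,2,0,2,1,0,1,2,0,1,0,2,1,2,0,1,2,1,0,2,1,2],
  [0,1,0,2,0,1,2,0,2,1,0,1,2,0,1,0,2,0,1,2,1,0,1,2,0,2,1,2],
  [0,1,0,2,0,1,2,0,2,1,0,1,2,0,1,0,2,0,1,2,1,0,2,0,1,0,2,1,2],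
  [0,1,0,2,0,1,2,0,2,1,0,1,2,0,1,0,2,1,0,1,2,1,0,2,0,1,0,2,1,2],
  [0,1,0,2,0,1,2,0,2,1,0,1,2,0,1,0,2,1,0,1,2,1,0,2,0,1,2,0,2,1,2],
  [0,1,0,2,0,1,2,0,2,1,0,1,2,0,1,0,2,0,1,2,0,2,1,2,0,1,2,1,0,2,1,2],
  [0,1,0,2,0,1,2,0,2,1,0,1,2,0,1,0,2,1,0,1,2,0,2,1,0,2,0,1,2,0,2,1,2],
  [0,1,0,2,0,1,2,0,2,1,0,1,2,0,1,0,2,1,0,1,2,0,2,1,0,2,0,1,0,2,1,0,1,2],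
  [0,1,0,2,0,1,2,0,2,1,0,1,2,0,1,0,2,0,1,2,0,2,1,2,0,1,2,1,0,1,2,0,2,1,2],
  [0,1,0,2,0,1,2,0,2,1,0,1,2,0,1,0,2,0,1,2,0,2,1,2,0,1,0,2,0,1,2,1,0,2,1,2],
  [0,1,0,2,0,1,2,0,2,1,0,1,2,0,1,0,2,0,1,2,0,2,1,2,0,1,0,2,1,0,1,2,1,0,2,1,2],
  [0,1,0,2,0,1,2,0,2,1,0,1,2,0,1,0,2,0,1,2,1,0,1,2,0,1,0,2,1,2,0,1,2,1,0,2,1,2],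
  [0,1,0,2,0,1,2,0,2,1,0,1,2,0,1,0,2,0,1,2,0,2,1,2,0,1,0,2,0,1,2,1,0,1,2,0,2,1,2],
  [0,1,0,2,0,1,2,0,2,1,0,1,2,0,1,0,2,0,1,2,0,2,1,2,0,1,0,2,0,1,2,1,0,2,0,1,0,2,1,2],
  [0,1,0,2,0,1,2,0,2,1,0,1,2,0,1,0,2,0,1,2,0,2,1,2,0,1,0,2,1,0,1,2,1,0,2,0,1,0,2,1,2],
  [0,1,0,2,0,1,2,0,2,1,0,1,2,0,1,0,2,0,1,2,0,2,1,2,0,1,0,2,1,0,1,2,1,0,2,0,1,2,0,2,1,2],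
  [0,1,0,2,0,1,2,0,2,1,0,1,2,0,1,0,2,0,1,2,0,2,1,2,0,1,0,2,1,0,1,2,0,2,1,0,2,0,1,0,2,1,2]]

def cntM (n : ℕ) : List ℕ := List.replicate n 0

theorem tbl_square : (tblM.all fun A => noSqM (A.2 ++ markM) (A.2 ++ markM)) = true := by
  decide +kernel

theorem tbl_center : (tblM.all fun A => tblM.all fun B => Nat.beq A.1 B.1 ||
    (List.range 5).all fun m => Nat.beq m 0 ||
      cenM (cntM m) (B.2 ++ markM) ((B.2 ++ markM).drop m) A.2) = true := by
  decide +kernel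

theorem tbl_mark : (tblM.all fun A => mtM markM A.2 markM &&
    (List.range A.2.length).all fun o =>
      Nat.beq o 0 || !(mtM markM ((A.2 ++ markM).drop o) markM)) = true := by
  decide +kernel

theorem tbl_prefix : (tblM.all fun A => tblM.all fun B =>
    !(mtM (cntM 22) A.2 B.2) || (Nat.beq A.1 B.1 && Nat.beq A.2.length B.2.length)) = true := by
  decide +kernel

theorem tbl_suffix : (tblM.all fun A => tblM.all fun B =>
    !(mtM (cntM 22) A.2.reverse B.2.reverse) ||
      (Nat.beq A.1 B.1 && Nat.beq A.2.length B.2.length)) = true := by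
  decide +kernel

theorem tbl_prefix' : (tblM.all fun A => tblM.all fun B =>
    !(mtM (cntM 11) A.2 B.2) || Nat.beq A.1 B.1) = true := by
  decide +kernel

theorem tbl_suffix' : (tblM.all fun A => tblM.all fun B =>
    !(mtM (cntM 11) A.2.reverse B.2.reverse) || Nat.beq A.1 B.1) = true := by
  decide +kernel

theorem tbl_exists : ((List.range 3).all fun c => (List.range 12).all fun m =>
    tblM.any fun A => Nat.beq A.1 c && Nat.beq A.2.length (22 + m)) = true := by
  decide +kernel

theorem base_square : (baseM.all fun w =>
    noSqM (w.take (w.length / 2)) (w ++ w) && w.all fun c => Nat.ble c 2) = true := by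
  decide +kernel

theorem tbl_letters : (tblM.all fun A => A.2.all fun c => Nat.ble c 2) = true := by
  decide +kernel

theorem base_exists : ((List.range 44).all fun n =>
    [0,5,7,9,10,14,17].contains n || baseM.any fun w => Nat.beq w.length n) = true := by
  decide +kernel

theorem mtM_of (r x y : List ℕ)
    (h : ∀ i < r.length, ∃ v, x[i]? = some v ∧ y[i]? = some v) : mtM r x y = true := by
  induction r generalizing x y with
  | nil => rfl
  | cons c r ih =>
    obtain ⟨v, h1, h2⟩ := h 0 (by simp)
    cases x with
    | nil => simp at h1
    | cons a x =>
      cases y with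
      | nil => simp at h2
      | cons b y =>
        simp only [List.getElem?_cons_zero, Option.some.injEq] at h1 h2
        have e : Nat.beq a b = true := by rw [h1, h2]; exact Nat.beq_refl v
        have : mtM r x y = true := by
          apply ih
          intro i hi
          have := h (i + 1) (by simp; omega)
          simpa using this
        change Bool.rec false (mtM r x y) (Nat.beq a b) = true
        rw [e]
        exact this

theorem frM_spec (f r l t : List ℕ) (ht : t = l.drop r.length) (h : frM f r l t = true) (p : ℕ)
    (h1 : r.length ≤ p) (h2 : p < r.length + f.length) (h0 : 0 < p)
    (hs : ∀ i < p, ∃ v, l[i]? = some v ∧ l[p + i]? = some v) : False := by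
  induction f generalizing r t with
  | nil => simp at h2; omega
  | cons g f ih =>
    cases t with
    | nil =>
      obtain ⟨v, -, hv⟩ := hs 0 h0
      have hl : l.length ≤ r.length := by
        have := congrArg List.length ht
        simp at this; omega
      rw [List.getElem?_eq_none (by omega)] at hv
      simp at hv
    | cons c t =>
      simp only [frM, Bool.and_eq_true, Bool.not_eq_true'] at h
      obtain ⟨ha, hb⟩ := h
      by_cases hp : r.length = p
      · have : mtM r l (c :: t) = true := by
          apply mtM_of
          intro i hi
          obtain ⟨v, e1, e2⟩ := hs i (by omega)
          refine ⟨v, e1, ?_⟩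
          rw [ht, List.getElem?_drop, hp]
          exact e2
        rw [this] at ha
        simp at ha
      · refine ih (c :: r) t ?_ hb (by simp; omega) (by simp at h2 ⊢; omega)
        have := congrArg List.tail ht
        simpa [List.tail_drop] using this

theorem noSqM_spec (f l : List ℕ) (h : noSqM f l = true) (s p : ℕ) (h0 : 0 < p)
    (hp : p ≤ f.length)
    (hs : ∀ i < p, ∃ v, l[s + i]? = some v ∧ l[s + p + i]? = some v) : False := by
  induction l generalizing s with
  | nil =>
    obtain ⟨v, hv, -⟩ := hs 0 h0
    simp at hv
  | cons c t ih =>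
    simp only [noSqM, Bool.and_eq_true] at h
    cases s with
    | zero =>
      refine frM_spec f [c] (c :: t) t (by simp) h.1 p (by simp; omega) (by simp; omega) h0 ?_
      intro i hi
      simpa using hs i hi
    | succ s =>
      apply ih h.2 s
      intro i hi
      have := hs i hi
      rw [show s + 1 + i = (s + i) + 1 by omega, show s + 1 + p + i = (s + p + i) + 1 by omega] at this
      simpa using this

theorem cenM_spec (k Q R A : List ℕ) (h : cenM k Q R A = true) (s : ℕ) (hs : s < A.length)
    (hh : ∀ i < A.length - s + k.length, ∃ v, (A ++ Q)[s + i]? = some v ∧ R[i]? = some v) :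
    False := by
  induction A generalizing s with
  | nil => simp at hs
  | cons c t ih =>
    simp only [cenM, Bool.and_eq_true, Bool.not_eq_true'] at h
    cases s with
    | zero =>
      have : mtM ((c :: t) ++ k) ((c :: t) ++ Q) R = true := by
        apply mtM_of
        intro i hi
        have := hh i (by simp at hi ⊢; omega)
        simpa using this
      rw [this] at h
      simp at h
    | succ s =>
      apply ih h.2 s (by simpa using hs)
      intro i hi
      have := hh i (by simp; omega)
      rw [show s + 1 + i = (s + i) + 1 by omega] at this
      simpa using this

theorem findM (b : ℕ → ℕ) (hb0 : b 0 = 0) (hm : ∀ i, b i < b (i + 1)) (y : ℕ) :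
    ∃ i, b i ≤ y ∧ y < b (i + 1) := by
  induction y with
  | zero => exact ⟨0, by omega, by have := hm 0; omega⟩
  | succ y ih =>
    obtain ⟨i, h1, h2⟩ := ih
    by_cases h : y + 1 < b (i + 1)
    · exact ⟨i, by omega, h⟩
    · exact ⟨i + 1, by omega, by have := hm (i + 1); omega⟩

/-- The combinatorial core: synchronisation of squares in the image of a circular word. -/
theorem coreM (x a b : ℕ → ℕ) (k n l : ℕ) (hb0 : b 0 = 0)
    (hl : ∀ i, b i + l < b (i + 1)) (hk : ∀ i, b (i + k) = b i + n)
    (hsq : ∀ s q, 0 < q → q < k → ∃ t < q, a (s + t) ≠ a (s + t + q))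
    (H1 : ∀ y i, (∀ t < l, x (y + t) = x (b i + t)) → ∃ j, y = b j)
    (H2 : ∀ i j, (∀ t, b i + t < b (i + 1) → b j + t < b (j + 1) → x (b i + t) = x (b j + t)) →
      a i = a j ∧ b (i + 1) + b j = b (j + 1) + b i)
    (H2' : ∀ i j, (∀ t, b i + t < b (i + 1) → b j + t < b (j + 1) →
        x (b (i + 1) - 1 - t) = x (b (j + 1) - 1 - t)) →
      a i = a j ∧ b (i + 1) + b j = b (j + 1) + b i)
    (H3 : ∀ i j m e, a j ≠ a i → a m ≠ a i → b i + e ≤ b (i + 1) →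
      (∀ t < e, b m + t < b (m + 1) → x (b i + t) = x (b m + t)) →
      (∀ t, b i + e + t < b (i + 1) → b j + t < b (j + 1) →
        x (b (i + 1) - 1 - t) = x (b (j + 1) - 1 - t)) → False)
    (H4 : ∀ i s p, 0 < p → b i ≤ s → s + 2 * p ≤ b (i + 1) + l →
      (∀ t < p, x (s + t) = x (s + t + p)) → False)
    (H5 : ∀ i s p, 0 < p → b i ≤ s → s < b (i + 1) → b (i + 1) < s + p → s + p < b (i + 1) + l →
      s + 2 * p ≤ b (i + 2) + l → (∀ t < p, x (s + t) = x (s + t + p)) → False)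
    (s p : ℕ) (hp0 : 0 < p) (hpn : p < n) : ∃ t < p, x (s + t) ≠ x (s + t + p) := by
  by_contra hcon
  push Not at hcon
  have hx : ∀ y, s ≤ y → y < s + p → x y = x (y + p) := by
    intro y h1 h2
    have := hcon (y - s) (by omega)
    rwa [show s + (y - s) = y by omega] at this
  have hm : ∀ i, b i < b (i + 1) := fun i => by have := hl i; omega
  have hmono : StrictMono b := strictMono_nat_of_lt_succ hm
  -- a pair of block starts at distance p
  have step1 : ∃ i, ∃ j, s ≤ b i ∧ b i ≤ s + p ∧ b j = b i + p := by
    obtain ⟨i, h1, h2⟩ := findM b hb0 hm s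
    have hl1 := hl (i + 1)
    by_cases c0 : s + 2 * p ≤ b (i + 1) + l
    · exact (H4 i s p hp0 h1 c0 hcon).elim
    by_cases c1 : b (i + 1) + l ≤ s + p
    · obtain ⟨j, hj⟩ := H1 (b (i + 1) + p) (i + 1) (by
        intro t ht
        rw [hx (b (i + 1) + t) (by omega) (by omega)]
        congr 1; omega)
      exact ⟨i + 1, j, by omega, by omega, hj.symm⟩
    by_cases c2 : s + p ≤ b (i + 1)
    · obtain ⟨j, hj⟩ := H1 (b (i + 1) - p) (i + 1) (by
        intro t ht
        rw [hx (b (i + 1) - p + t) (by omega) (by omega)]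
        congr 1; omega)
      exact ⟨j, i + 1, by omega, by omega, by omega⟩
    by_cases c3 : s + 2 * p ≤ b (i + 2) + l
    · exact (H5 i s p hp0 h1 h2 (by omega) (by omega) c3 hcon).elim
    · have : b (i + 1 + 1) = b (i + 2) := rfl
      obtain ⟨j, hj⟩ := H1 (b (i + 2) - p) (i + 2) (by
        intro t ht
        rw [hx (b (i + 2) - p + t) (by omega) (by omega)]
        congr 1; omega)
      exact ⟨j, i + 2, by omega, by omega, by omega⟩
  classical
  have hi := Nat.find_spec step1
  have hmin := fun m => Nat.find_min step1 (m := m)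
  generalize Nat.find step1 = i at hi hmin
  obtain ⟨j, hsi, his, hij⟩ := hi
  have hjpos : j ≠ 0 := by rintro rfl; omega
  have hijlt : i < j := hmono.lt_iff_lt.mp (by omega)
  have hleft : i = 0 ∨ b (i - 1) < s := by
    by_contra hc
    push Not at hc
    obtain ⟨hi0, hc⟩ := hc
    obtain ⟨i, rfl⟩ := Nat.exists_eq_succ_of_ne_zero hi0
    obtain ⟨j, rfl⟩ := Nat.exists_eq_succ_of_ne_zero hjpos
    simp only [Nat.succ_eq_add_one, Nat.add_sub_cancel] at *
    have := hm i
    have hh := H2' i j (by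
      intro t h1 h2
      rw [hx _ (by omega) (by omega)]
      congr 1; omega)
    exact hmin i (by omega) ⟨j, hc, by omega, by omega⟩
  obtain ⟨i', g1, g2⟩ := findM b hb0 hm (s + p)
  have hii' : i ≤ i' := by
    by_contra hc
    have : b (i' + 1) ≤ b i := hmono.monotone (by omega)
    omega
  have hright : ∀ r, b (i + r) ≤ s + p → b (j + r) = b (i + r) + p ∧ ∀ t < r, a (i + t) = a (j + t) := by
    intro r
    induction r with
    | zero => intro _; exact ⟨by simpa using hij, by intro t ht; omega⟩
    | succ r ih =>
      intro hr
      have h1 := hm (i + r)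
      have h1' : b (i + r) < b (i + (r + 1)) := h1
      obtain ⟨e1, e2⟩ := ih (by omega)
      have hbi : b i ≤ b (i + r) := hmono.monotone (by omega)
      have hh := H2 (i + r) (j + r) (by
        intro t q1 q2
        have q1' : b (i + r) + t < b (i + (r + 1)) := q1
        rw [hx _ (by omega) (by omega), e1]
        congr 1; omega)
      obtain ⟨u1, u2⟩ := hh
      have u2' : b (i + (r + 1)) + b (j + r) = b (j + (r + 1)) + b (i + r) := u2
      refine ⟨by omega, ?_⟩
      intro t ht
      rcases Nat.lt_succ_iff_lt_or_eq.mp ht with h | rfl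
      · exact e2 t h
      · exact u1
  obtain ⟨r, rfl⟩ := Nat.exists_eq_add_of_le hii'
  obtain ⟨e1, e2⟩ := hright r g1
  have hqk : j < i + k := hmono.lt_iff_lt.mp (by rw [hk]; omega)
  have hij' : i + r ≤ j := by
    by_contra hc
    have : b j < b (i + r) := hmono (by omega)
    omega
  by_cases c : i + r = j
  · obtain ⟨t, ht, hne⟩ := hsq i r (by omega) (by omega)
    apply hne
    rw [e2 t ht, ← c]
    congr 1; omega
  have hjs : s + p < b j := by
    have : b (i + r + 1) ≤ b j := hmono.monotone (by omega)
    omega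
  have hi0 : i ≠ 0 := by rintro rfl; omega
  have hleft' : b (i - 1) < s := by tauto
  obtain ⟨i, rfl⟩ := Nat.exists_eq_succ_of_ne_zero hi0
  obtain ⟨j, rfl⟩ := Nat.exists_eq_succ_of_ne_zero hjpos
  simp only [Nat.succ_eq_add_one, Nat.add_sub_cancel] at *
  have hj : j = i + 1 + r := by
    by_contra hc
    have h1 : b (i + 1 + r + 1) ≤ b j := hmono.monotone (by omega)
    have h2 := hm j
    have hh := H2' i j (by
      intro t q1 q2
      rw [hx _ (by omega) (by omega)]
      congr 1; omega)
    omega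
  subst hj
  by_cases ca : a i = a (i + 1 + r)
  · obtain ⟨t, ht, hne⟩ := hsq i (r + 1) (by omega) (by omega)
    apply hne
    cases t with
    | zero => rw [Nat.add_zero, ca]; congr 1; omega
    | succ t =>
      have := e2 t (by omega)
      rw [show i + (t + 1) = i + 1 + t by omega, this]
      congr 1; omega
  by_cases cb : a (i + 1 + r + 1 + r) = a (i + 1 + r)
  · obtain ⟨t, ht, hne⟩ := hsq (i + 1) (r + 1) (by omega) (by omega)
    apply hne
    rcases Nat.lt_succ_iff_lt_or_eq.mp ht with h | rfl
    · rw [e2 t h]; congr 1; omega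
    · rw [← cb]; congr 1; omega
  have hbi : b (i + 1) ≤ b (i + 1 + r) := hmono.monotone (by omega)
  refine H3 (i + 1 + r) i (i + 1 + r + 1 + r) (s + p - b (i + 1 + r)) ca cb (by omega) ?_ ?_
  · intro t ht _
    rw [hx _ (by omega) (by omega), e1]
    congr 1; omega
  · intro t q1 q2
    symm
    rw [hx _ (by omega) (by omega)]
    congr 1; omega

/-- an `n`-periodic ternary sequence without squares of period less than `n` -/
def GoodM (n : ℕ) : Prop := ∃ x : ℕ → ℕ, (∀ i, x i < 3) ∧ (∀ i, x (i + n) = x i) ∧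
  ∀ s p, 0 < p → p < n → ∃ t < p, x (s + t) ≠ x (s + t + p)

theorem GoodM.word {n : ℕ} (h : GoodM n) :
    ∃ w : List (Fin 3), w.length = n ∧ AvoidsPowerCyc 2 w := by
  obtain ⟨x, h3, hper, hsq⟩ := h
  refine ⟨List.ofFn (fun i : Fin n => (⟨x i, h3 i⟩ : Fin 3)), by simp, ?_⟩
  set w := List.ofFn (fun i : Fin n => (⟨x i, h3 i⟩ : Fin 3)) with hw
  have hwl : w.length = n := by simp [hw]
  have key : ∀ k j, j < k * n →
      (List.replicate k w).flatten[j]? = some (⟨x j, h3 j⟩ : Fin 3) := by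
    intro k
    induction k with
    | zero => intro j hj; simp at hj
    | succ k ih =>
      intro j hj
      rw [List.replicate_succ, List.flatten_cons]
      by_cases hjn : j < n
      · rw [List.getElem?_append_left (by omega)]
        simp [hw, hjn]
      · rw [List.getElem?_append_right (by omega), hwl, ih (j - n) (by
          rw [Nat.succ_mul] at hj; omega)]
        have := hper (j - n)
        rw [show j - n + n = j by omega] at this
        simp [this]
  rintro m u ⟨hm, v, hv, rfl⟩ ⟨k, l₁, l₂, hk⟩
  rw [hwl]
  by_contra hc
  obtain ⟨t, ht, hne⟩ := hsq l₁.length m hm (by omega)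
  apply hne
  have hlen : (List.replicate k w).flatten.length = k * n := by simp [hwl]
  have hlen2 : l₁.length + (m + m) + l₂.length = k * n := by
    rw [← hlen, ← hk]
    simp [hv]; omega
  have e : (List.replicate k w).flatten = l₁ ++ (v ++ (v ++ l₂)) := by
    rw [← hk]; simp [List.replicate_succ]
  have k1 := key k (l₁.length + t) (by omega)
  have k2 := key k (l₁.length + t + m) (by omega)
  rw [e] at k1 k2
  rw [List.getElem?_append_right (by omega), List.getElem?_append_left (by omega)] at k1
  rw [List.getElem?_append_right (by omega), List.getElem?_append_right (by omega),
    List.getElem?_append_left (by omega)] at k2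
  rw [show l₁.length + t + m - l₁.length - v.length = l₁.length + t - l₁.length by omega, k1] at k2
  simpa using k2

theorem goodM_base (n : ℕ) (h0 : 0 < n) (hn : n < 44)
    (hex : n ∉ ({5, 7, 9, 10, 14, 17} : Set ℕ)) : GoodM n := by
  have h1 := base_exists
  rw [List.all_eq_true] at h1
  have h2 := h1 n (by simpa using hn)
  simp only [Bool.or_eq_true, List.any_eq_true] at h2
  have h3 : ¬ ([0,5,7,9,10,14,17].contains n = true) := by
    simp at hex ⊢
    omega
  obtain ⟨w, hw, hl⟩ := h2.resolve_left h3
  have hl := Nat.eq_of_beq_eq_true hl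
  have h4 := base_square
  rw [List.all_eq_true] at h4
  have h5 := h4 w hw
  simp only [Bool.and_eq_true, List.all_eq_true] at h5
  obtain ⟨h5, h6⟩ := h5
  have hget : ∀ i, w[i % n]? = some (w.getD (i % n) 0) := by
    intro i
    have := Nat.mod_lt i h0
    rw [List.getD_eq_getElem?_getD, List.getElem?_eq_getElem (by omega)]
    simp
  have hper : ∀ i, w.getD ((i + n) % n) 0 = w.getD (i % n) 0 := by
    intro i; rw [Nat.add_mod_right]
  have hww : ∀ i < 2 * n, (w ++ w)[i]? = some (w.getD (i % n) 0) := by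
    intro i hi
    rw [← hget]
    by_cases h : i < n
    · rw [List.getElem?_append_left (by omega), Nat.mod_eq_of_lt h]
    · rw [List.getElem?_append_right (by omega), hl]
      rw [Nat.mod_eq_sub_mod (by omega), Nat.mod_eq_of_lt (by omega)]
  have small : ∀ s p, 0 < p → 2 * p ≤ n →
      ∃ t < p, w.getD ((s + t) % n) 0 ≠ w.getD ((s + t + p) % n) 0 := by
    intro s p hp hpn
    by_contra hc
    push Not at hc
    have hs := Nat.mod_lt s h0
    refine noSqM_spec _ _ h5 (s % n) p hp (by simp; omega) ?_
    intro i hi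
    refine ⟨_, hww _ (by omega), ?_⟩
    rw [hww _ (by omega), show s % n + p + i = s % n + (i + p) by omega, Nat.mod_add_mod,
      Nat.mod_add_mod, hc i hi]
    congr 3; omega
  refine ⟨fun i => w.getD (i % n) 0, ?_, hper, ?_⟩
  · intro i
    have := List.mem_of_getElem? (hget i)
    have := Nat.le_of_ble_eq_true (h6 _ this)
    show w.getD (i % n) 0 < 3
    omega
  · intro s p hp hpn
    by_cases h : 2 * p ≤ n
    · exact small s p hp h
    · obtain ⟨t, ht, hne⟩ := small (s + p) (n - p) (by omega) (by omega)
      refine ⟨t, by omega, ?_⟩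
      intro hcon
      apply hne
      simp only at hcon
      rw [show s + p + t = s + t + p by omega, ← hcon, ← hper]
      congr 2; omega

theorem tblM_getElem {c : ℕ} {A : List ℕ} (hA : (c, A) ∈ tblM) (t : ℕ) (ht : t < 5) :
    A[t]? = markM[t]? := by
  have : ∀ A ∈ tblM, ∀ t < 5, A.2[t]? = markM[t]? := by decide +kernel
  exact this _ hA t ht

theorem tblM_pairs {f : ℕ × List ℕ → ℕ × List ℕ → Bool}
    (h : (tblM.all fun A => tblM.all fun B => f A B) = true) {c d : ℕ} {A B : List ℕ}
    (hA : (c, A) ∈ tblM) (hB : (d, B) ∈ tblM) : f (c, A) (d, B) = true := by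
  rw [List.all_eq_true] at h
  have := h _ hA
  rw [List.all_eq_true] at this
  exact this _ hB

theorem goodM_step (n k : ℕ) (hk : 2 ≤ k) (h1 : 22 * k ≤ n) (h2 : n ≤ 33 * k) (hg : GoodM k) :
    GoodM n := by
  obtain ⟨a, ha3, haper, hasq⟩ := hg
  set b : ℕ → ℕ := fun i => i * n / k with hb
  have hb0 : b 0 = 0 := by simp [hb]
  have hlo : ∀ i, b i + 22 ≤ b (i + 1) := by
    intro i
    simp only [hb]
    rw [← Nat.add_mul_div_right _ _ (by omega : 0 < k)]
    apply Nat.div_le_div_right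
    rw [Nat.add_mul i 1 n]; omega
  have hhi : ∀ i, b (i + 1) ≤ b i + 33 := by
    intro i
    simp only [hb]
    rw [← Nat.add_mul_div_right _ _ (by omega : 0 < k)]
    apply Nat.div_le_div_right
    rw [Nat.add_mul i 1 n]; omega
  have hbk : ∀ i, b (i + k) = b i + n := by
    intro i
    simp only [hb]
    rw [Nat.add_mul, Nat.add_mul_div_left _ _ (by omega : 0 < k)]
  have hm : ∀ i, b i < b (i + 1) := fun i => by have := hlo i; omega
  have hmono : StrictMono b := strictMono_nat_of_lt_succ hm
  -- choice of the blocks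
  have hblk : ∀ c m, ∃ A : List ℕ, c < 3 → m < 12 → A.length = 22 + m ∧ (c, A) ∈ tblM := by
    intro c m
    by_cases hc : c < 3 ∧ m < 12
    · have := tbl_exists
      rw [List.all_eq_true] at this
      have := this c (by simpa using hc.1)
      rw [List.all_eq_true] at this
      have := this m (by simpa using hc.2)
      rw [List.any_eq_true] at this
      obtain ⟨⟨d, A⟩, hA, h⟩ := this
      simp only [Bool.and_eq_true] at h
      obtain ⟨e1, e2⟩ := h
      have e1 := Nat.eq_of_beq_eq_true e1
      have e2 := Nat.eq_of_beq_eq_true e2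
      subst e1
      exact ⟨A, fun _ _ => ⟨e2, hA⟩⟩
    · exact ⟨[], fun h h' => absurd ⟨h, h'⟩ hc⟩
  choose blk hblk using hblk
  set B : ℕ → List ℕ := fun i => blk (a i) (b (i + 1) - b i - 22) with hB
  have hBl : ∀ i, (B i).length = b (i + 1) - b i := by
    intro i
    have h1 := hlo i
    have h2 := hhi i
    have := (hblk (a i) (b (i + 1) - b i - 22) (ha3 i) (by omega)).1
    simp only [hB]; omega
  have hBm : ∀ i, (a i, B i) ∈ tblM := by
    intro i
    have h1 := hlo i
    have h2 := hhi i
    exact (hblk (a i) (b (i + 1) - b i - 22) (ha3 i) (by omega)).2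
  have hBper : ∀ i, B (i + k) = B i := by
    intro i
    simp only [hB]
    rw [haper, show i + k + 1 = (i + 1) + k by omega, hbk, hbk]
    congr 1; omega
  -- the image sequence
  choose idx hidx1 hidx2 using findM b hb0 hm
  have hidx : ∀ i y, b i ≤ y → y < b (i + 1) → idx y = i := by
    intro i y q1 q2
    have r1 := hidx1 y
    have r2 := hidx2 y
    have s1 : idx y < i + 1 := hmono.lt_iff_lt.mp (by omega)
    have s2 : i < idx y + 1 := hmono.lt_iff_lt.mp (by omega)
    omega
  set x : ℕ → ℕ := fun y => (B (idx y)).getD (y - b (idx y)) 0 with hx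
  have hxB : ∀ i t, b i + t < b (i + 1) → (B i)[t]? = some (x (b i + t)) := by
    intro i t ht
    simp only [hx]
    rw [hidx i (b i + t) (by omega) ht, Nat.add_sub_cancel_left]
    have := hBl i
    rw [List.getD_eq_getElem?_getD, List.getElem?_eq_getElem (by omega)]
    simp
  have hxR : ∀ i t, b i + t < b (i + 1) → (B i).reverse[t]? = some (x (b (i + 1) - 1 - t)) := by
    intro i t ht
    have := hBl i
    rw [List.getElem?_reverse (by omega), hBl, hxB i _ (by omega)]
    congr 2; omega
  have hxP : ∀ i t, t < 5 → markM[t]? = some (x (b i + t)) := by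
    intro i t ht
    have := hlo i
    rw [← hxB i t (by omega), tblM_getElem (hBm i) t ht]
  have hxBP : ∀ i t, b i + t < b (i + 1) + 5 → (B i ++ markM)[t]? = some (x (b i + t)) := by
    intro i t ht
    have := hBl i
    have := hm i
    by_cases h : b i + t < b (i + 1)
    · rw [List.getElem?_append_left (by omega)]
      exact hxB i t h
    · rw [List.getElem?_append_right (by omega), hxP (i + 1) _ (by omega)]
      congr 2; omega
  have hxBBP : ∀ i t, b i + t < b (i + 2) + 5 →
      (B i ++ (B (i + 1) ++ markM))[t]? = some (x (b i + t)) := by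
    intro i t ht
    have := hBl i
    have := hm i
    by_cases h : b i + t < b (i + 1)
    · rw [List.getElem?_append_left (by omega)]
      exact hxB i t h
    · have e : b (i + 1 + 1) = b (i + 2) := rfl
      rw [List.getElem?_append_right (by omega), hxBP (i + 1) _ (by omega)]
      congr 2; omega
  have han : ∀ i, a i ≠ a (i + 1) := by
    intro i
    obtain ⟨t, ht, h⟩ := hasq i 1 (by omega) (by omega)
    have : t = 0 := by omega
    subst this
    simpa using h
  refine ⟨x, ?_, ?_, ?_⟩
  · intro y
    have q1 := hidx1 y
    have q2 := hidx2 y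
    have := hxB (idx y) (y - b (idx y)) (by omega)
    have hmem := List.mem_of_getElem? this
    have hc := tbl_letters
    rw [List.all_eq_true] at hc
    have hc := hc _ (hBm (idx y))
    rw [List.all_eq_true] at hc
    have := Nat.le_of_ble_eq_true (hc _ hmem)
    rw [show b (idx y) + (y - b (idx y)) = y by omega] at this
    omega
  · intro y
    have q1 := hidx1 y
    have q2 := hidx2 y
    have e1 := hbk (idx y)
    have e2 := hbk (idx y + 1)
    have e3 : b (idx y + 1 + k) = b (idx y + k + 1) := by congr 1; omega
    have u1 := hxB (idx y) (y - b (idx y)) (by omega)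
    have u2 := hxB (idx y + k) (y - b (idx y)) (by omega)
    rw [hBper, u1] at u2
    rw [show b (idx y) + (y - b (idx y)) = y by omega,
      show b (idx y + k) + (y - b (idx y)) = y + n by omega] at u2
    simpa using u2.symm
  · apply coreM x a b k n 5 hb0 (fun i => by have := hlo i; omega) hbk hasq
    · -- marker
      intro y i h
      refine ⟨idx y, ?_⟩
      have q1 := hidx1 y
      have q2 := hidx2 y
      by_contra hne
      have hc := tbl_mark
      rw [List.all_eq_true] at hc
      have hc := hc _ (hBm (idx y))
      simp only [Bool.and_eq_true, List.all_eq_true, List.mem_range, Bool.or_eq_true,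
        Bool.not_eq_true'] at hc
      have := hBl (idx y)
      rcases hc.2 (y - b (idx y)) (by omega) with h0 | h0
      · have := Nat.eq_of_beq_eq_true h0
        omega
      · rw [mtM_of] at h0
        · simp at h0
        · intro t ht
          have ht5 : t < 5 := ht
          refine ⟨_, ?_, hxP i t ht5⟩
          rw [List.getElem?_drop, hxBP _ _ (by omega), ← h t ht5]
          congr 2; omega
    · -- prefix code
      intro i j h
      have hc := tblM_pairs tbl_prefix (hBm i) (hBm j)
      rw [mtM_of] at hc
      · simp only [Bool.not_true, Bool.false_or, Bool.and_eq_true] at hc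
        have c1 := Nat.eq_of_beq_eq_true hc.1
        have c2 := Nat.eq_of_beq_eq_true hc.2
        have := hBl i
        have := hBl j
        have := hm i
        have := hm j
        exact ⟨c1, by omega⟩
      · intro t ht
        have ht' : t < 22 := by simpa [cntM] using ht
        have := hlo i
        have := hlo j
        refine ⟨_, hxB i t (by omega), ?_⟩
        rw [h t (by omega) (by omega)]
        exact hxB j t (by omega)
    · -- suffix code
      intro i j h
      have hc := tblM_pairs tbl_suffix (hBm i) (hBm j)
      rw [mtM_of] at hc
      · simp only [Bool.not_true, Bool.false_or, Bool.and_eq_true] at hc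
        have c1 := Nat.eq_of_beq_eq_true hc.1
        have c2 := Nat.eq_of_beq_eq_true hc.2
        have := hBl i
        have := hBl j
        have := hm i
        have := hm j
        exact ⟨c1, by omega⟩
      · intro t ht
        have ht' : t < 22 := by simpa [cntM] using ht
        have := hlo i
        have := hlo j
        refine ⟨_, hxR i t (by omega), ?_⟩
        rw [h t (by omega) (by omega)]
        exact hxR j t (by omega)
    · -- no mixing
      intro i j m e hji hmi hle hpre hsuf
      have := hlo i
      by_cases h11 : 11 ≤ e
      · have hc := tblM_pairs tbl_prefix' (hBm i) (hBm m)
        rw [mtM_of] at hc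
        · simp only [Bool.not_true, Bool.false_or] at hc
          exact hmi (Nat.eq_of_beq_eq_true hc).symm
        · intro t ht
          have ht' : t < 11 := by simpa [cntM] using ht
          have := hlo m
          refine ⟨_, hxB i t (by omega), ?_⟩
          rw [hpre t (by omega) (by omega)]
          exact hxB m t (by omega)
      · have hc := tblM_pairs tbl_suffix' (hBm i) (hBm j)
        rw [mtM_of] at hc
        · simp only [Bool.not_true, Bool.false_or] at hc
          exact hji (Nat.eq_of_beq_eq_true hc).symm
        · intro t ht
          have ht' : t < 11 := by simpa [cntM] using ht
          have := hlo j
          refine ⟨_, hxR i t (by omega), ?_⟩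
          rw [hsuf t (by omega) (by omega)]
          exact hxR j t (by omega)
    · -- squares inside a block and a marker
      intro i s p hp hs hsp h
      have hc := tbl_square
      rw [List.all_eq_true] at hc
      have hl := hBl i
      have hmi := hm i
      refine noSqM_spec _ _ (hc _ (hBm i)) (s - b i) p hp (by simp [hl, markM]; omega) ?_
      intro t ht
      refine ⟨_, hxBP i _ (by omega), ?_⟩
      rw [hxBP i _ (by omega), show b i + (s - b i + t) = s + t by omega, h t ht]
      congr 2; omega
    · -- squares centred inside a marker
      intro i s p hp hs hs1 hsp hsp5 hs2 h
      have hc := tblM_pairs tbl_center (hBm i) (hBm (i + 1))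
      simp only [Bool.or_eq_true, List.all_eq_true, List.mem_range] at hc
      rcases hc with hc | hc
      · exact han i (Nat.eq_of_beq_eq_true hc)
      rcases hc (s + p - b (i + 1)) (by omega) with h0 | h0
      · have := Nat.eq_of_beq_eq_true h0
        omega
      have hl := hBl i
      refine cenM_spec _ _ _ _ h0 (s - b i) (by omega) ?_
      intro t ht
      have ht' : t < p := by simp [cntM] at ht; omega
      have e : b (i + 1 + 1) = b (i + 2) := rfl
      refine ⟨_, hxBBP i _ (by omega), ?_⟩
      rw [List.getElem?_drop, hxBP (i + 1) _ (by omega),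
        show b i + (s - b i + t) = s + t by omega, h t ht']
      congr 2; omega

theorem goodM_all (n : ℕ) : 0 < n → n ∉ ({5, 7, 9, 10, 14, 17} : Set ℕ) → GoodM n := by
  induction n using Nat.strong_induction_on with
  | _ n ih =>
    intro h0 hex
    by_cases hn : n < 44
    · exact goodM_base n h0 hn hex
    have : ∃ k, 2 ≤ k ∧ 22 * k ≤ n ∧ n ≤ 33 * k ∧ k ∉ ({5, 7, 9, 10, 14, 17} : Set ℕ) := by
      by_cases c1 : n ≤ 66
      · exact ⟨2, by omega, by omega, by omega, by simp⟩
      by_cases c2 : n ≤ 99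
      · exact ⟨3, by omega, by omega, by omega, by simp⟩
      by_cases c3 : n ≤ 132
      · exact ⟨4, by omega, by omega, by omega, by simp⟩
      by_cases c4 : n ≤ 198
      · exact ⟨6, by omega, by omega, by omega, by simp⟩
      by_cases c5 : n ≤ 264
      · exact ⟨8, by omega, by omega, by omega, by simp⟩
      by_cases c6 : n ≤ 363
      · exact ⟨11, by omega, by omega, by omega, by simp⟩
      by_cases c7 : n ≤ 429
      · exact ⟨13, by omega, by omega, by omega, by simp⟩
      exact ⟨n / 22, by omega, by omega, by omega, by simp; omega⟩
    obtain ⟨k, k2, k3, k4, k5⟩ := this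
    exact goodM_step n k k2 k3 k4 (ih k (by omega) (by omega) k5)

theorem ternary_avoids_squares_cyclically :
    ∀ n : ℕ, 0 < n → n ∉ ({5, 7, 9, 10, 14, 17} : Set ℕ) →
      ∃ w : List (Fin 3), w.length = n ∧ AvoidsPowerCyc 2 w :=
  fun n h0 hn => (goodM_all n h0 hn).word
end

section
/- Let σ₃ be the morphism on binary words defined by σ₃(0) = 0001 and σ₃(1) = 101, and let u be any factor of σ₃ⁿ(0) for some n ≥ 0 with |u| ≥ 29. Then u is light, i.e. the number of occurrences of the letter 0 in u is strictly greater than the number of occurrences of the letter 1 in u. -/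
/-- Dekking-style morphism σ₃ : 0 ↦ 0001, 1 ↦ 101. -/
def sigma3 : Fin 2 → List (Fin 2) := fun a => if a = 0 then [0, 0, 0, 1] else [1, 0, 1]

/-- A pair of letter counts is fine if the total is below 29 or zeros are in the majority. -/
def okPair (z o : ℕ) : Bool := Nat.blt (z + o) 29 || Nat.blt o z

/-- Checks all prefixes of total length at most 57. -/
def checkPre : List (Fin 2) → ℕ → ℕ → Bool
  | [], z, o => okPair z o
  | a :: l, z, o => okPair z o && (Nat.ble 57 (z + o) ||
      (match a with
        | 0 => checkPre l (z + 1) o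
        | 1 => checkPre l z (o + 1)))

/-- Checks all factors of length at most 57. -/
def checkAll : List (Fin 2) → Bool
  | [] => true
  | a :: l => checkPre (a :: l) 0 0 && checkAll l

theorem okPair_spec {z o : ℕ} (h : okPair z o = true) (h2 : 29 ≤ z + o) : o < z := by
  simp only [okPair, Bool.or_eq_true, Nat.blt_eq] at h
  omega

theorem checkPre_spec (l : List (Fin 2)) : ∀ (z o : ℕ) (p : List (Fin 2)),
    checkPre l z o = true → p <+: l → z + o + p.length ≤ 57 → 29 ≤ z + o + p.length →
    o + p.count 1 < z + p.count 0 := by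
  induction l with
  | nil =>
    intro z o p h hp h1 h2
    have : p = [] := List.prefix_nil.mp hp
    subst this
    simpa using okPair_spec h (by simpa using h2)
  | cons a l ih =>
    intro z o p h hp h1 h2
    cases p with
    | nil =>
      simp only [checkPre, Bool.and_eq_true] at h
      simpa using okPair_spec h.1 (by simpa using h2)
    | cons b p =>
      obtain ⟨rfl, hp2⟩ := List.cons_prefix_cons.mp hp
      simp only [checkPre, Bool.and_eq_true, Bool.or_eq_true, Nat.ble_eq] at h
      simp only [List.length_cons] at h1 h2
      rcases h.2 with h3 | h3
      · omega
      · fin_cases b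
        · have := ih (z + 1) o p h3 hp2 (by omega) (by omega)
          simp
          omega
        · have := ih z (o + 1) p h3 hp2 (by omega) (by omega)
          simp
          omega

theorem checkAll_spec (l : List (Fin 2)) (h : checkAll l = true) (u : List (Fin 2))
    (hu : u <:+: l) (h1 : u.length ≤ 57) (h2 : 29 ≤ u.length) : u.count 1 < u.count 0 := by
  induction l with
  | nil =>
    have : u = [] := List.infix_nil.mp hu
    subst this
    simp at h2
  | cons a l ih =>
    simp only [checkAll, Bool.and_eq_true] at h
    rcases List.infix_cons_iff.mp hu with hu | hu
    · simpa using checkPre_spec (a :: l) 0 0 u h.1 hu (by omega) (by omega)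
    · exact ih h.2 hu

theorem am_append (v w : List (Fin 2)) :
    applyMorphism sigma3 (v ++ w) = applyMorphism sigma3 v ++ applyMorphism sigma3 w := by
  simp [applyMorphism]

theorem am_cons (a : Fin 2) (w : List (Fin 2)) :
    applyMorphism sigma3 (a :: w) = sigma3 a ++ applyMorphism sigma3 w := by
  simp [applyMorphism]

theorem am_infix {v w : List (Fin 2)} (h : v <:+: w) :
    applyMorphism sigma3 v <:+: applyMorphism sigma3 w := by
  obtain ⟨s, t, rfl⟩ := h
  exact ⟨applyMorphism sigma3 s, applyMorphism sigma3 t, by simp [am_append]⟩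

theorem am_iter_infix (n : ℕ) {v w : List (Fin 2)} (h : v <:+: w) :
    (applyMorphism sigma3)^[n] v <:+: (applyMorphism sigma3)^[n] w := by
  induction n generalizing v w with
  | zero => exact h
  | succ n ih => exact ih (am_infix h)

theorem am_length (w : List (Fin 2)) : 3 * w.length ≤ (applyMorphism sigma3 w).length := by
  induction w with
  | nil => simp
  | cons a w ih =>
    rw [am_cons, List.length_append, List.length_cons]
    have : 3 ≤ (sigma3 a).length := by fin_cases a <;> simp [sigma3]
    omega

/-- A short factor of an image is a factor of the image of a shorter factor. -/
theorem cover (k : ℕ) (u w : List (Fin 2)) (hu : u <:+: applyMorphism sigma3 w)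
    (hk : u.length ≤ 3 * k + 1) :
    ∃ y, y <:+: w ∧ y.length ≤ k + 1 ∧ u <:+: applyMorphism sigma3 y := by
  induction w with
  | nil => exact ⟨[], List.infix_rfl, by simp, hu⟩
  | cons a w ih =>
    have key : u <:+: applyMorphism sigma3 w →
        ∃ y, y <:+: a :: w ∧ y.length ≤ k + 1 ∧ u <:+: applyMorphism sigma3 y := by
      intro h
      obtain ⟨y, h1, h2, h3⟩ := ih h
      exact ⟨y, List.infix_cons h1, h2, h3⟩
    obtain ⟨x, z, hxz⟩ := hu
    rw [am_cons, List.append_assoc, List.append_eq_append_iff] at hxz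
    rcases hxz with ⟨c, hc1, hc2⟩ | ⟨c, hc1, hc2⟩
    · by_cases hc : c = []
      · subst hc
        exact key ⟨[], z, by simpa using hc2⟩
      · refine ⟨a :: w.take k, ?_, by simp, ?_⟩
        · exact (List.cons_prefix_cons.mpr ⟨rfl, List.take_prefix k w⟩).isInfix
        · have hp : u <+: c ++ applyMorphism sigma3 w := ⟨z, hc2⟩
          have hpos : 0 < c.length := List.length_pos_iff.mpr hc
          have hq : u <+: c ++ applyMorphism sigma3 (w.take k) := by
            by_cases hl : w.length ≤ k
            · rwa [List.take_of_length_le hl]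
            · refine List.prefix_of_prefix_length_le hp (l₂ := c ++ applyMorphism sigma3 (w.take k))
                ⟨applyMorphism sigma3 (w.drop k), ?_⟩ ?_
              · rw [List.append_assoc, ← am_append, List.take_append_drop]
              · have := am_length (w.take k)
                rw [List.length_take] at this
                rw [List.length_append]
                omega
          obtain ⟨t, ht⟩ := hq
          refine ⟨x, t, ?_⟩
          rw [am_cons, hc1, List.append_assoc, ht, List.append_assoc]
    · exact key ⟨c, z, by rw [List.append_assoc, hc2]⟩

theorem two_letters (y : List (Fin 2)) (hy : y.length ≤ 2) :
    checkAll ((applyMorphism sigma3)^[4] y) = true := by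
  match y, hy with
  | [], _ => decide +kernel
  | [a], _ => revert a; decide +kernel
  | [a, b], _ => revert a b; decide +kernel
  | _ :: _ :: _ :: _, h => simp at h

theorem short_light (n : ℕ) (u : List (Fin 2))
    (hu : u <:+: (applyMorphism sigma3)^[n + 4] [(0 : Fin 2)])
    (h1 : u.length ≤ 57) (h2 : 29 ≤ u.length) : u.count 1 < u.count 0 := by
  simp only [Function.iterate_succ_apply'] at hu
  obtain ⟨y1, a1, b1, c1⟩ := cover 19 u _ hu (by omega)
  obtain ⟨y2, a2, b2, c2⟩ := cover 7 y1 _ a1 (by omega)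
  obtain ⟨y3, a3, b3, c3⟩ := cover 3 y2 _ a2 (by omega)
  obtain ⟨y4, a4, b4, c4⟩ := cover 1 y3 _ a3 (by omega)
  have hfin : u <:+: (applyMorphism sigma3)^[4] y4 :=
    c1.trans ((am_infix c2).trans ((am_iter_infix 2 c3).trans (am_iter_infix 3 c4)))
  exact checkAll_spec _ (two_letters y4 b4) u hfin h1 h2

theorem long_light (n : ℕ) : ∀ (m : ℕ) (u : List (Fin 2)), u.length ≤ m →
    u <:+: (applyMorphism sigma3)^[n + 4] [(0 : Fin 2)] → 29 ≤ u.length →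
    u.count 1 < u.count 0 := by
  intro m
  induction m with
  | zero => intro u h1 _ h2; omega
  | succ m ih =>
    intro u hm hu h2
    by_cases h1 : u.length ≤ 57
    · exact short_light n u hu h1 h2
    · have e1 := short_light n (u.take 29) ((List.take_prefix 29 u).isInfix.trans hu)
        (by rw [List.length_take]; omega) (by rw [List.length_take]; omega)
      have e2 := ih (u.drop 29) (by rw [List.length_drop]; omega)
        ((List.drop_suffix 29 u).isInfix.trans hu) (by rw [List.length_drop]; omega)
      rw [← List.take_append_drop 29 u, List.count_append, List.count_append]
      omega

theorem long_factors_of_sigma3_are_light :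
    ∀ (n : ℕ) (u : List (Fin 2)),
      u <:+: (applyMorphism sigma3)^[n] [(0 : Fin 2)] → 29 ≤ u.length →
      u.count 1 < u.count 0 := by
  intro n u hu h
  refine long_light n u.length u le_rfl (hu.trans ?_) h
  rw [Function.iterate_add_apply]
  exact am_iter_infix n (List.singleton_infix_iff _ _ |>.mpr (by decide +kernel))
end
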